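/- arXiv:2303.10503 — 2 statements merged into one kernel-verified Lean document; each statement's English description precedes it below -/
import Mathlib

section
/- For every ρ ∈ (0, 4], the intervals [0, 1] and [−1, 0] are stable under the gradient-descent map with step-size 1 for f_ρ: if x ∈ [0, 1] then x − f_ρ'(x) ∈ [0, 1], and if x ∈ [−1, 0] then x − f_ρ'(x) ∈ [−1, 0]. -/
/-- The piecewise function `f_ρ` from the paper's discussion of the logistic map
embedded in gradient descent with step-size 1. -/
noncomputable def frho (ρ : ℝ) (x : ℝ) : ℝ :=
  if |x| ≤ 1 then
    ρ / 3 * |x| ^ 3 + (1 - ρ) / 2 * x ^ 2 + (ρ - 1) ^ 3 / (6 * ρ ^ 2)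
  else if |x| ≤ 3 / 2 then
    -(ρ / 3) * |x| ^ 3 + (1 + 3 * ρ) / 2 * x ^ 2 - 2 * ρ * |x| +
      ((ρ - 1) ^ 3 + 4 * ρ ^ 3) / (6 * ρ ^ 2)
  else
    1 / 2 * x ^ 2 + ρ / 4 * |x| + (4 * (ρ - 1) ^ 3 - 11 * ρ ^ 3) / (24 * ρ ^ 2)

/-!
On `[-3/2, 3/2]` the two inner pieces of `f_ρ` merge into a single formula: the second piece is the
first one minus `(2ρ/3) (|x| - 1)³`. This correction vanishes to third order at `|x| = 1`, so for
`|x| ≤ 1` only the first piece contributes to the derivative, and a gradient step sends `x` to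
`ρ x (1 - |x|)`. Up to a sign this is the logistic map, which preserves `[0, 1]` for `ρ ∈ [0, 4]`.
-/

/-- The logistic map `x ↦ r x (1 - x)` with parameter `r`, which the gradient step for `f_r`
reproduces on `[0, 1]`. It is defined for all real `r` and `x`. -/
def logisticMap (r x : ℝ) : ℝ := r * x * (1 - x)

theorem mapsTo_logisticMap_Icc {r : ℝ} (hr : r ∈ Set.Icc (0 : ℝ) 4) :
    Set.MapsTo (logisticMap r) (Set.Icc 0 1) (Set.Icc 0 1) := by
  rintro x ⟨hx₀, hx₁⟩
  have one_sub_nonneg : 0 ≤ 1 - x := sub_nonneg.mpr hx₁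
  refine ⟨mul_nonneg (mul_nonneg hr.1 hx₀) one_sub_nonneg, ?_⟩
  calc r * x * (1 - x) ≤ 4 * x * (1 - x) := by gcongr; exact hr.2
    _ ≤ (x + (1 - x)) ^ 2 := four_mul_le_sq_add x (1 - x)
    _ = 1 := by ring

theorem hasDerivAt_abs_pow_add_two (n : ℕ) (x : ℝ) :
    HasDerivAt (fun y : ℝ ↦ |y| ^ (n + 2)) ((n + 2) * |x| ^ n * x) x := by
  have one_lt : (1 : ℝ) < (n + 2 : ℕ) := by norm_cast; lia
  simpa [← Real.rpow_natCast] using hasDerivAt_abs_rpow x one_lt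

theorem hasFDerivAt_posPart_norm_sub_pow {E : Type*} [NormedAddCommGroup E] [NormedSpace ℝ E]
    {x : E} {r : ℝ} (hx : ‖x‖ ≤ r) {n : ℕ} (hn : 1 < n) :
    HasFDerivAt (fun y ↦ (‖y‖ - r)⁺ ^ n) (0 : E →L[ℝ] ℝ) x := by
  have posPart_le (y : E) : (‖y‖ - r)⁺ ≤ ‖y - x‖ :=
    sup_le ((sub_le_sub_left hx _).trans (norm_sub_norm_le y x)) (norm_nonneg _)
  refine Asymptotics.IsBigO.hasFDerivAt (n := n) (.of_norm_le fun y ↦ ?_) hn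
  rw [norm_pow, Real.norm_of_nonneg (posPart_nonneg _)]
  gcongr
  exact posPart_le y

theorem frho_eq_sub_posPart_pow {ρ x : ℝ} (hρ : ρ ≠ 0) (hx : |x| ≤ 3 / 2) :
    frho ρ x = ρ / 3 * |x| ^ 3 + (1 - ρ) / 2 * x ^ 2 - 2 * ρ / 3 * (|x| - 1)⁺ ^ 3 +
      (ρ - 1) ^ 3 / (6 * ρ ^ 2) := by
  rcases le_or_gt |x| 1 with h | h
  · simp [frho, h]
  · rw [frho, if_neg h.not_ge, if_pos hx, posPart_eq_self.mpr (sub_nonneg.mpr h.le), ← sq_abs x]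
    field_simp
    ring

theorem hasDerivAt_frho {ρ x : ℝ} (hρ : ρ ≠ 0) (hx : |x| ≤ 1) :
    HasDerivAt (frho ρ) (ρ * |x| * x + (1 - ρ) * x) x := by
  have cubic : HasDerivAt (fun y ↦ |y| ^ 3) (3 * |x| * x) x :=
    (hasDerivAt_abs_pow_add_two 1 x).congr_deriv (by norm_num)
  have correction : HasDerivAt (fun y ↦ (|y| - 1)⁺ ^ 3) 0 x :=
    (hasFDerivAt_posPart_norm_sub_pow hx (by norm_num)).hasDerivAt
  have single_formula : frho ρ =ᶠ[nhds x] fun y ↦ ρ / 3 * |y| ^ 3 + (1 - ρ) / 2 * y ^ 2 -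
      2 * ρ / 3 * (|y| - 1)⁺ ^ 3 + (ρ - 1) ^ 3 / (6 * ρ ^ 2) := by
    filter_upwards [continuous_abs.continuousAt.eventually_lt_const (by linarith : |x| < 3 / 2)]
      with y hy using frho_eq_sub_posPart_pow hρ hy.le
  have formula_deriv := (((cubic.const_mul (ρ / 3)).add
    ((hasDerivAt_pow 2 x).const_mul ((1 - ρ) / 2))).sub
      (correction.const_mul (2 * ρ / 3))).add_const ((ρ - 1) ^ 3 / (6 * ρ ^ 2))
  refine (formula_deriv.congr_of_eventuallyEq single_formula).congr_deriv ?_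
  norm_num
  ring

theorem sub_deriv_frho_of_mem_Icc_zero_one {ρ x : ℝ} (hρ : ρ ≠ 0) (hx : x ∈ Set.Icc (0 : ℝ) 1) :
    x - deriv (frho ρ) x = logisticMap ρ x := by
  rw [(hasDerivAt_frho hρ (abs_le.mpr ⟨by linarith [hx.1], hx.2⟩)).deriv, abs_of_nonneg hx.1,
    logisticMap]
  ring

theorem sub_deriv_frho_of_mem_Icc_neg_one_zero {ρ x : ℝ} (hρ : ρ ≠ 0)
    (hx : x ∈ Set.Icc (-1 : ℝ) 0) : x - deriv (frho ρ) x = -logisticMap ρ (-x) := by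
  rw [(hasDerivAt_frho hρ (abs_le.mpr ⟨hx.1, by linarith [hx.2]⟩)).deriv, abs_of_nonpos hx.2,
    logisticMap]
  ring

/-- For every `ρ ∈ (0, 4]`, the intervals `[0, 1]` and
`[-1, 0]` are stable under the gradient-descent map with step-size 1 for `f_ρ`. -/
theorem frho_gd_interval_stable (ρ : ℝ) (hρ : ρ ∈ Set.Ioc (0 : ℝ) 4) :
    (∀ x ∈ Set.Icc (0 : ℝ) 1, x - deriv (frho ρ) x ∈ Set.Icc (0 : ℝ) 1) ∧
      (∀ x ∈ Set.Icc (-1 : ℝ) 0, x - deriv (frho ρ) x ∈ Set.Icc (-1 : ℝ) 0) := by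
  have hρ₀ : ρ ≠ 0 := hρ.1.ne'
  have logistic_stable := mapsTo_logisticMap_Icc (Set.Ioc_subset_Icc_self hρ)
  constructor
  · intro x hx
    rw [sub_deriv_frho_of_mem_Icc_zero_one hρ₀ hx]
    exact logistic_stable hx
  · intro x hx
    have neg_mem : -x ∈ Set.Icc (0 : ℝ) 1 := by simpa [and_comm, neg_le] using hx
    rw [sub_deriv_frho_of_mem_Icc_neg_one_zero hρ₀ hx]
    simpa [and_comm] using logistic_stable neg_mem
end

section
/- For every ρ ∈ (0, 4]: if x > 1 then x − f_ρ'(x) ∈ [−1, 0], and if x < −1 then x − f_ρ'(x) ∈ [0, 1]; i.e. one step of gradient descent with step-size 1 on f_ρ maps (1, ∞) into [−1, 0] and (−∞, −1) into [0, 1]. -/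
/-!
The two outer pieces of `f_ρ` differ by `ρ / 3 * (3 / 2 - |x|) ^ 3`, which vanishes to third order
at `|x| = 3 / 2`. So for `|x| > 1` the function is the outermost quadratic in `|x|` plus a cubed
positive part, and a gradient step lands on `-sign x * ρ * (1 / 4 - (3 / 2 - |x|)⁺ ^ 2)`, whose last
factor lies in `[0, 1 / 4]`.
-/

open Set

lemma hasDerivAt_posPart_pow {n : ℕ} (hn : 1 < n) (x : ℝ) :
    HasDerivAt (fun y : ℝ ↦ y⁺ ^ n) (n * x⁺ ^ (n - 1)) x := by
  have continuous_posPart_pow (m : ℕ) : Continuous fun y : ℝ ↦ y⁺ ^ m :=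
    continuous_posPart.pow m
  refine hasDerivAt_of_hasDerivAt_of_ne' (x := 0) (fun y hy ↦ ?_)
    (continuous_posPart_pow n).continuousAt
    ((continuous_posPart_pow (n - 1)).const_mul (n : ℝ)).continuousAt x
  rcases hy.lt_or_gt with hneg | hpos
  · have eventually_zero : (fun z : ℝ ↦ z⁺ ^ n) =ᶠ[nhds y] fun _ ↦ 0 := by
      filter_upwards [Iio_mem_nhds hneg] with z hz
      rw [posPart_of_nonpos hz.le, zero_pow (by lia)]
    rw [posPart_of_nonpos hneg.le, zero_pow (by lia), mul_zero]
    exact (hasDerivAt_const y 0).congr_of_eventuallyEq eventually_zero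
  · have eventually_pow : (fun z : ℝ ↦ z⁺ ^ n) =ᶠ[nhds y] fun z ↦ z ^ n := by
      filter_upwards [Ioi_mem_nhds hpos] with z hz
      rw [posPart_of_nonneg hz.le]
    rw [posPart_of_nonneg hpos.le]
    exact (hasDerivAt_pow n y).congr_of_eventuallyEq eventually_pow

lemma frho_eq_of_one_lt_abs {ρ x : ℝ} (hρ : ρ ≠ 0) (hx : 1 < |x|) :
    frho ρ x = 1 / 2 * x ^ 2 + ρ / 4 * |x| + ρ / 3 * (3 / 2 - |x|)⁺ ^ 3 +
      (4 * (ρ - 1) ^ 3 - 11 * ρ ^ 3) / (24 * ρ ^ 2) := by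
  rw [frho, if_neg hx.not_ge]
  split_ifs with h
  · rw [posPart_of_nonneg (sub_nonneg.2 h), ← sq_abs x]
    field_simp
    ring
  · rw [posPart_of_nonpos (sub_nonpos.2 (not_le.1 h).le)]
    ring

lemma hasDerivAt_frho_of_one_lt_abs {ρ x : ℝ} (hρ : ρ ≠ 0) (hx : 1 < |x|) :
    HasDerivAt (frho ρ) (x + SignType.sign x * (ρ * (1 / 4 - (3 / 2 - |x|)⁺ ^ 2))) x := by
  have hasDerivAt_abs_x : HasDerivAt (fun y : ℝ ↦ |y|) (SignType.sign x : ℝ) x :=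
    hasDerivAt_abs (abs_pos.1 (zero_lt_one.trans hx))
  have hasDerivAt_cube := (hasDerivAt_posPart_pow (n := 3) (by lia) (3 / 2 - |x|)).comp x
    (hasDerivAt_abs_x.const_sub (3 / 2))
  have hasDerivAt_glued := ((((hasDerivAt_pow 2 x).const_mul (1 / 2)).add
    (hasDerivAt_abs_x.const_mul (ρ / 4))).add (hasDerivAt_cube.const_mul (ρ / 3))).add_const
      ((4 * (ρ - 1) ^ 3 - 11 * ρ ^ 3) / (24 * ρ ^ 2))
  have eventually_eq := (continuous_abs.continuousAt.eventually_const_lt hx).mono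
    fun y hy ↦ frho_eq_of_one_lt_abs hρ hy
  refine (hasDerivAt_glued.congr_of_eventuallyEq eventually_eq).congr_deriv ?_
  push_cast
  ring

lemma sub_deriv_frho_of_one_lt_abs {ρ x : ℝ} (hρ : ρ ≠ 0) (hx : 1 < |x|) :
    x - deriv (frho ρ) x = -(SignType.sign x * (ρ * (1 / 4 - (3 / 2 - |x|)⁺ ^ 2))) := by
  rw [(hasDerivAt_frho_of_one_lt_abs hρ hx).deriv, sub_add_cancel_left]

lemma mul_one_fourth_sub_posPart_sq_mem_Icc {ρ t : ℝ} (hρ : 0 ≤ ρ) (ht : 1 ≤ t) :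
    ρ * (1 / 4 - (3 / 2 - t)⁺ ^ 2) ∈ Icc 0 (ρ / 4) := by
  have posPart_le : (3 / 2 - t)⁺ ≤ 1 / 2 := sup_le (by linarith) (by norm_num)
  have sq_le : (3 / 2 - t)⁺ ^ 2 ≤ (1 / 2) ^ 2 := pow_le_pow_left₀ (posPart_nonneg _) posPart_le 2
  constructor
  · exact mul_nonneg hρ (by linarith)
  · linarith [mul_nonneg hρ (sq_nonneg (3 / 2 - t)⁺)]

theorem frho_gd_outer_step_general (ρ : ℝ) (hρ : 0 < ρ) :
    (∀ x : ℝ, 1 < x → x - deriv (frho ρ) x ∈ Icc (-(ρ / 4)) 0) ∧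
      (∀ x : ℝ, x < -1 → x - deriv (frho ρ) x ∈ Icc 0 (ρ / 4)) := by
  refine ⟨fun x hx ↦ ?_, fun x hx ↦ ?_⟩
  · have one_lt_abs : 1 < |x| := lt_abs.2 (.inl hx)
    have size_mem := mul_one_fourth_sub_posPart_sq_mem_Icc hρ.le one_lt_abs.le
    rw [sub_deriv_frho_of_one_lt_abs hρ.ne' one_lt_abs, sign_pos (by linarith),
      SignType.coe_one, one_mul]
    exact ⟨neg_le_neg size_mem.2, neg_nonpos.2 size_mem.1⟩
  · have one_lt_abs : 1 < |x| := lt_abs.2 (.inr (lt_neg_of_lt_neg hx))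
    rw [sub_deriv_frho_of_one_lt_abs hρ.ne' one_lt_abs, sign_neg (by linarith),
      SignType.coe_neg_one, neg_one_mul, neg_neg]
    exact mul_one_fourth_sub_posPart_sq_mem_Icc hρ.le one_lt_abs.le

/-- For every `ρ ∈ (0, 4]`, one step of gradient descent with
step-size 1 on `f_ρ` maps `(1, ∞)` into `[-1, 0]` and `(-∞, -1)` into `[0, 1]`. -/
theorem frho_gd_outer_step (ρ : ℝ) (hρ : ρ ∈ Set.Ioc (0 : ℝ) 4) :
    (∀ x : ℝ, 1 < x → x - deriv (frho ρ) x ∈ Set.Icc (-1 : ℝ) 0) ∧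
      (∀ x : ℝ, x < -1 → x - deriv (frho ρ) x ∈ Set.Icc (0 : ℝ) 1) := by
  have quarter_le_one : ρ / 4 ≤ 1 := by linarith [hρ.2]
  exact (frho_gd_outer_step_general ρ hρ.1).imp
    (fun h x hx ↦ Icc_subset_Icc_left (neg_le_neg quarter_le_one) (h x hx))
    (fun h x hx ↦ Icc_subset_Icc_right quarter_le_one (h x hx))
end
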